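/- Let G be a bounded simply connected domain, ζ₀ ∈ G, K ⊂ G a compact set containing ζ₀, and δ > 0. Then there exists a constant C = C(K,δ,ζ₀) > 0 such that g_G(z,ζ) ≥ C·g_G(z,ζ₀) for all ζ ∈ K and all z ∈ G with dist(z,K) > δ. -/

import Mathlib

open MeasureTheory Filter Metric Set Polynomial Topology
open scoped ENNReal Classical

noncomputable section

/-- The normalized zero counting measure of a polynomial. -/
noncomputable def zeroMeasure (p : Polynomial ℂ) : Measure ℂ :=
  ((p.natDegree : ℝ≥0∞))⁻¹ • (p.roots.map (fun z => (Measure.dirac z : Measure ℂ))).sum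

/-- Weak-star convergence of a sequence of measures along a filter: integrals of continuous
functions with compact support converge. -/
def WeakStarTo (μ : ℕ → Measure ℂ) (l : Filter ℕ) (ν : Measure ℂ) : Prop :=
  ∀ f : ℂ → ℝ, Continuous f → HasCompactSupport f →
    Tendsto (fun n => ∫ z, f z ∂(μ n)) l (𝓝 (∫ z, f z ∂ν))

/-- The logarithmic potential of a measure. -/
noncomputable def logPotential (μ : Measure ℂ) (z : ℂ) : ℝ :=
  ∫ t, Real.log (1 / dist z t) ∂μ

/-- The logarithmic energy of a measure. -/
noncomputable def logEnergy (μ : Measure ℂ) : ℝ :=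
  ∫ z, ∫ t, Real.log (1 / dist z t) ∂μ ∂μ

/-- The logarithmic kernel is integrable for the product measure. -/
def HasFiniteEnergy (μ : Measure ℂ) : Prop :=
  Integrable (fun p : ℂ × ℂ => Real.log (1 / dist p.1 p.2)) (μ.prod μ)

/-- The set of energies of probability measures of finite energy supported on `E`. -/
def energies (E : Set ℂ) : Set ℝ :=
  {I | ∃ μ : Measure ℂ, IsProbabilityMeasure μ ∧ μ Eᶜ = 0 ∧ HasFiniteEnergy μ ∧ I = logEnergy μ}

/-- The logarithmic capacity of `E`: `exp(-V_E)` where `V_E` is the minimal energy, and `0`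
if no probability measure on `E` has finite energy. -/
noncomputable def logCap (E : Set ℂ) : ℝ :=
  if (energies E).Nonempty then Real.exp (-sInf (energies E)) else 0

/-- `μ` is an equilibrium measure of `E`: an energy-minimizing probability measure on `E`. -/
def IsEquilibriumMeasure (E : Set ℂ) (μ : Measure ℂ) : Prop :=
  IsProbabilityMeasure μ ∧ μ Eᶜ = 0 ∧ HasFiniteEnergy μ ∧ logEnergy μ = sInf (energies E)

/-- The sup norm of a polynomial on a set. -/
noncomputable def supNorm (E : Set ℂ) (p : Polynomial ℂ) : ℝ :=
  sSup ((fun z => ‖p.eval z‖) '' E)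

/-- The unbounded connected component `Ω` of the complement of `E` (the points of the
complement whose connected component in the complement is unbounded). -/
def outerDomain (E : Set ℂ) : Set ℂ :=
  {z | z ∉ E ∧ ¬ Bornology.IsBounded (connectedComponentIn Eᶜ z)}

/-- A sequence of monic polynomials `P k` of respective degrees `N k`, indexed by an increasing
sequence `N` of positive integers, is asymptotically extremal on `E` if
`limsup ‖P k‖_E^(1/N k) ≤ cap E`. -/
def AsymptoticallyExtremal (E : Set ℂ) (N : ℕ → ℕ) (P : ℕ → Polynomial ℂ) : Prop :=
  StrictMono N ∧ (∀ k, 0 < N k) ∧ (∀ k, (P k).Monic) ∧ (∀ k, (P k).natDegree = N k) ∧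
    Filter.limsup (fun k => supNorm E (P k) ^ ((N k : ℝ)⁻¹)) atTop ≤ logCap E

/-- A function is harmonic on a planar set if it is locally the real part of an
analytic function. -/
def HarmonicOnPlane (u : ℂ → ℝ) (s : Set ℂ) : Prop :=
  ∀ z ∈ s, ∃ ε > 0, Metric.ball z ε ⊆ s ∧ ∃ f : ℂ → ℂ,
    AnalyticOnNhd ℂ f (Metric.ball z ε) ∧ ∀ w ∈ Metric.ball z ε, u w = (f w).re

/-- `g` is the Green function of `G` with pole at `ζ`: harmonic and positive on `G ∖ {ζ}`,
`g(z) + log|z-ζ|` bounded near `ζ`, and `g → 0` at every boundary point of `G`. -/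
structure IsGreenFunction (G : Set ℂ) (ζ : ℂ) (g : ℂ → ℝ) : Prop where
  harmonic : HarmonicOnPlane g (G \ {ζ})
  pos : ∀ z ∈ G \ {ζ}, 0 < g z
  logBounded : ∃ C : ℝ, ∀ᶠ z in 𝓝[G \ {ζ}] ζ, |g z + Real.log (dist z ζ)| ≤ C
  boundaryLimit : ∀ t ∈ frontier G, Tendsto g (𝓝[G] t) (𝓝 0)

/-- `z₀` is a non-convex type singularity (NCS) point of `G`: a boundary point of `G`
carrying a closed disk `D̄ ⊆ G ∪ {z₀}` with `z₀` on its circumference, and a segment `L`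
from a point `ζ₀` of the open disk to `z₀` along which `g_G(z,ζ₀)/|z-z₀| → +∞`. -/
def IsNCSPoint (G : Set ℂ) (z₀ : ℂ) : Prop :=
  z₀ ∈ frontier G ∧
    ∃ c : ℂ, ∃ r : ℝ, 0 < r ∧ dist z₀ c = r ∧ Metric.closedBall c r \ {z₀} ⊆ G ∧
      ∃ ζ₀ ∈ Metric.ball c r, ∀ g : ℂ → ℝ, IsGreenFunction G ζ₀ g →
        Tendsto (fun z => g z / dist z z₀) (𝓝[segment ℝ ζ₀ z₀ \ {z₀}] z₀) atTop

end

/-!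
The positivity of Green functions and Lindelöf's form of the maximum principle, in which one
boundary point or pole `p` may be neglected as long as the functions compare up to a constant
near `p`, allow Green functions to be compared with multiples of `log (R / |z - a|)`. On annuli
this carries a positive lower bound for `g_G(·, ξ)` from a small disc to a larger concentric
one, uniformly in the pole `ξ` and even when the annulus contains `ξ`. As `G` is connected,
these lower bounds hold near every pair `(ζ, a)` of points of `G`, hence uniformly for `ζ ∈ K`
on a compact neighbourhood `S ⊆ G` of `K`. On `∂S` all Green functions with pole in `K` also
have a common upper bound, so `C g_G(·, ζ₀) ≤ g_G(·, ζ)` there, and the maximum principle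
extends this to `G ∖ S`.
-/

section MaximumPrinciple

open InnerProductSpace

lemma HarmonicOnPlane.harmonicOnNhd {u : ℂ → ℝ} {s : Set ℂ} (hu : HarmonicOnPlane u s) :
    HarmonicOnNhd u s := by
  intro z hz
  obtain ⟨ε, hε, -, f, hf, huf⟩ := hu z hz
  refine (harmonicAt_congr_nhds ?_).2 (hf z (mem_ball_self hε)).harmonicAt_re
  exact eventually_of_mem (ball_mem_nhds z hε) huf

lemma harmonicOnNhd_log_div_dist {R : ℝ} (hR : R ≠ 0) (a : ℂ) :
    HarmonicOnNhd (fun z ↦ Real.log (R / dist z a)) {a}ᶜ := by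
  intro z hza
  have hsub : z - a ≠ 0 := sub_ne_zero.2 hza
  have hlog : HarmonicAt (fun w ↦ Real.log ‖(R : ℂ) / (w - a)‖) z :=
    (by fun_prop (disch := exact hsub) : AnalyticAt ℂ (fun w ↦ (R : ℂ) / (w - a)) z)
      |>.harmonicAt_log_norm (div_ne_zero (by exact_mod_cast hR) hsub)
  refine (harmonicAt_congr_nhds (.of_forall fun w ↦ ?_)).2 hlog
  rw [norm_div, Complex.norm_real, ← dist_eq_norm, Real.norm_eq_abs, ← abs_of_nonneg dist_nonneg,
    ← abs_div, Real.log_abs, abs_of_nonneg dist_nonneg]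

lemma tendsto_log_div_dist_of_mem_sphere {a t : ℂ} {r : ℝ} (hr : r ≠ 0) (ht : t ∈ sphere a r) :
    Tendsto (fun z ↦ Real.log (r / dist z a)) (𝓝 t) (𝓝 0) := by
  have hta : t ≠ a := ne_of_mem_sphere ht hr
  have hcont := (harmonicOnNhd_log_div_dist hr a t hta).1.continuousAt.tendsto
  rwa [mem_sphere.1 ht, div_self hr, Real.log_one] at hcont

lemma tendsto_log_div_dist_atTop {R : ℝ} (hR : 0 < R) (a : ℂ) :
    Tendsto (fun z ↦ Real.log (R / dist z a)) (𝓝[≠] a) atTop := by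
  simp only [div_eq_mul_inv, dist_eq_norm]
  exact Real.tendsto_log_atTop.comp <|
    (tendsto_norm_sub_self_nhdsNE a).inv_tendsto_nhdsGT_zero.const_mul_atTop hR

/-- Apply the maximum modulus principle to `exp (-f)`, where `u = re f` near `z`. -/
lemma eventually_eq_of_isLocalMin_of_harmonicAt {u : ℂ → ℝ} {z : ℂ} (hu : HarmonicAt u z)
    (hmin : IsLocalMin u z) : ∀ᶠ w in 𝓝 z, u w = u z := by
  obtain ⟨ε, hε, hball⟩ := eventually_nhds_iff_ball.1 hu.eventually
  obtain ⟨f, hf, hfu⟩ := HarmonicOnNhd.exists_analyticOnNhd_ball_re_eq hball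
  have hnorm : ∀ w ∈ ball z ε, ‖Complex.exp (-f w)‖ = Real.exp (-u w) := by
    intro w hw
    rw [Complex.norm_exp, Complex.neg_re, ← hfu hw]
  have hdiff : ∀ᶠ w in 𝓝 z, DifferentiableAt ℂ (fun w ↦ Complex.exp (-f w)) w := by
    filter_upwards [ball_mem_nhds z hε] with w hw
    exact (hf w hw).differentiableAt.neg.cexp
  have hmax : IsLocalMax (norm ∘ fun w ↦ Complex.exp (-f w)) z := by
    filter_upwards [hmin, ball_mem_nhds z hε] with w hle hw
    simpa only [Function.comp, hnorm w hw, hnorm z (mem_ball_self hε), Real.exp_le_exp,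
      neg_le_neg_iff] using hle
  filter_upwards [Complex.norm_eventually_eq_of_isLocalMax hdiff hmax, ball_mem_nhds z hε]
    with w heq hw
  simpa only [hnorm w hw, hnorm z (mem_ball_self hε), Real.exp_eq_exp, neg_inj] using heq

lemma isCompact_setOf_le_of_eventually_lt {X : Type*} [TopologicalSpace X] {U : Set X}
    {u : X → ℝ} {m : ℝ} (hU : IsCompact (closure U)) (hu : ContinuousOn u U)
    (hbd : ∀ t ∈ closure U \ U, ∀ᶠ z in 𝓝[U] t, m < u z) : IsCompact {z ∈ U | u z ≤ m} := by
  refine hU.of_isClosed_subset (isClosed_of_closure_subset fun t ht ↦ ?_)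
    fun z hz ↦ subset_closure hz.1
  have hfreq : ∃ᶠ z in 𝓝[U] t, u z ≤ m :=
    frequently_nhdsWithin_iff.2 ((mem_closure_iff_frequently.1 ht).mono fun z hz ↦ hz.symm)
  have hnot : ¬ ∀ᶠ z in 𝓝[U] t, m < u z := fun h ↦ hfreq (h.mono fun z hz ↦ not_le.2 hz)
  have htU : t ∈ U := by
    by_contra htU
    exact hnot (hbd t ⟨closure_mono (sep_subset U _) ht, htU⟩)
  exact ⟨htU, not_lt.1 fun hlt ↦ hnot ((hu t htU).eventually (lt_mem_nhds hlt))⟩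

theorem nonneg_of_harmonicOnNhd {U : Set ℂ} (hU : IsOpen U) (hUb : Bornology.IsBounded U)
    {u : ℂ → ℝ} (hu : HarmonicOnNhd u U)
    (hbd : ∀ t ∈ frontier U, ∀ ε > 0, ∀ᶠ z in 𝓝[U] t, -ε < u z) : ∀ z ∈ U, 0 ≤ u z := by
  by_contra! ⟨z₀, hz₀, hneg⟩
  have hcompact : ∀ m < 0, IsCompact {z ∈ U | u z ≤ m} := fun m hm ↦
    isCompact_setOf_le_of_eventually_lt hUb.isCompact_closure hu.continuousOn fun t ht ↦ by
      simpa using hbd t (hU.frontier_eq ▸ ht) (-m) (neg_pos.2 hm)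
  obtain ⟨a, ⟨haU, ha⟩, hamin⟩ := (hcompact _ hneg).exists_isMinOn ⟨z₀, hz₀, le_rfl⟩
    (hu.continuousOn.mono (sep_subset U _))
  have hmin : ∀ z ∈ U, u a ≤ u z := fun z hz ↦
    (le_total (u z) (u z₀)).elim (fun h ↦ hamin ⟨hz, h⟩) ha.trans
  have hA : IsCompact {z ∈ U | u z ≤ u a} := hcompact _ (ha.trans_lt hneg)
  have hAopen : IsOpen {z ∈ U | u z ≤ u a} := by
    refine isOpen_iff_mem_nhds.2 fun t ⟨htU, hta⟩ ↦ ?_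
    have htmin : IsLocalMin u t :=
      eventually_of_mem (hU.mem_nhds htU) fun z hz ↦ hta.trans (hmin z hz)
    filter_upwards [hU.mem_nhds htU, eventually_eq_of_isLocalMin_of_harmonicAt (hu t htU) htmin]
      with z hz heq
    exact ⟨hz, heq.trans_le hta⟩
  have huniv := IsClopen.eq_univ ⟨hA.isClosed, hAopen⟩ ⟨a, haU, le_rfl⟩
  exact noncompact_univ ℂ (huniv ▸ hA)

theorem le_of_harmonicOnNhd {U : Set ℂ} (hU : IsOpen U) (hUb : Bornology.IsBounded U)
    {u v : ℂ → ℝ} (hu : HarmonicOnNhd u U) (hv : HarmonicOnNhd v U)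
    (hbd : ∀ t ∈ frontier U, ∀ ε > 0, ∀ᶠ z in 𝓝[U] t, u z < v z + ε) : ∀ z ∈ U, u z ≤ v z := by
  intro z hz
  refine sub_nonneg.1 (nonneg_of_harmonicOnNhd hU hUb (hv.sub hu) (fun t ht ε hε ↦ ?_) z hz)
  filter_upwards [hbd t ht ε hε] with w hw
  rw [Pi.sub_apply]
  linarith

/-- Lindelöf's argument: adding `ε * log (R / |z - p|)` to the larger function outweighs
any constant near `p`, and `ε` then tends to `0`. -/
theorem le_of_harmonicOnNhd_diff_singleton {U : Set ℂ} (hU : IsOpen U)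
    (hUb : Bornology.IsBounded U) {p : ℂ} {u v : ℂ → ℝ} (hu : HarmonicOnNhd u (U \ {p}))
    (hv : HarmonicOnNhd v (U \ {p})) {M : ℝ} (hp : ∀ᶠ z in 𝓝[U \ {p}] p, u z ≤ v z + M)
    (hbd : ∀ t ∈ frontier U, t ≠ p → ∀ ε > 0, ∀ᶠ z in 𝓝[U \ {p}] t, u z < v z + ε) :
    ∀ z ∈ U \ {p}, u z ≤ v z := by
  intro z hz
  obtain ⟨R, hR, hUR⟩ := hUb.subset_ball_lt 0 p
  have hlog_nonneg : ∀ w ∈ U \ {p}, 0 ≤ Real.log (R / dist w p) := fun w hw ↦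
    Real.log_nonneg ((one_le_div (dist_pos.2 hw.2)).2 (mem_ball.1 (hUR hw.1)).le)
  have hperturbed : ∀ ε > 0, u z ≤ v z + ε * Real.log (R / dist z p) := by
    intro ε hε
    refine le_of_harmonicOnNhd (hU.sdiff isClosed_singleton) (hUb.subset sdiff_subset) hu
      (hv.add (((harmonicOnNhd_log_div_dist hR.ne' p).mono fun w hw ↦ hw.2).const_smul (c := ε)))
      (fun t ht η hη ↦ ?_) z hz
    simp only [Pi.add_apply, Pi.smul_apply, smul_eq_mul]
    obtain rfl | htp := eq_or_ne t p
    · have hlarge := ((tendsto_log_div_dist_atTop hR t).const_mul_atTop hε).eventually_ge_atTop M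
      filter_upwards [hp, hlarge.filter_mono (nhdsWithin_mono t fun w hw ↦ hw.2)] with w hw hM
      linarith
    · have htU : t ∈ frontier U := by
        rw [(hU.sdiff isClosed_singleton).frontier_eq] at ht
        rw [hU.frontier_eq]
        exact ⟨closure_mono sdiff_subset ht.1, fun h ↦ ht.2 ⟨h, htp⟩⟩
      filter_upwards [hbd t htU htp η hη, self_mem_nhdsWithin] with w hlt hw
      linarith [mul_nonneg hε.le (hlog_nonneg w hw)]
  have hlim : Tendsto (fun ε ↦ v z + ε * Real.log (R / dist z p)) (𝓝[>] 0) (𝓝 (v z)) :=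
    (by fun_prop : Continuous fun ε ↦ v z + ε * Real.log (R / dist z p)).tendsto' 0 _ (by simp)
      |>.mono_left nhdsWithin_le_nhds
  exact ge_of_tendsto hlim (eventually_mem_nhdsWithin.mono hperturbed)

end MaximumPrinciple

lemma div_log_mul_log_le {r s ρ c : ℝ} (hs : 0 < s) (hsr : s < r) (hsρ : s ≤ ρ)
    (hc : 0 ≤ c) : c / Real.log (r / s) * Real.log (r / ρ) ≤ c := by
  have hr : 0 < r := hs.trans hsr
  have hρ : 0 < ρ := hs.trans_le hsρ
  have hlog : 0 < Real.log (r / s) := Real.log_pos ((one_lt_div hs).2 hsr)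
  calc c / Real.log (r / s) * Real.log (r / ρ)
      ≤ c / Real.log (r / s) * Real.log (r / s) := by gcongr
    _ = c := div_mul_cancel₀ c hlog.ne'

namespace IsGreenFunction

open InnerProductSpace

variable {G : Set ℂ} {ζ a : ℂ} {g : ℂ → ℝ} {r s ρ c : ℝ}

lemma harmonicOnNhd (hg : IsGreenFunction G ζ g) : HarmonicOnNhd g (G \ {ζ}) :=
  hg.harmonic.harmonicOnNhd

lemma le_log_div_dist (hg : IsGreenFunction G ζ g) (hG : IsOpen G) {R : ℝ}
    (hGR : G ⊆ closedBall ζ R) : ∀ z ∈ G \ {ζ}, g z ≤ Real.log (R / dist z ζ) := by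
  intro z hz
  have hR : 0 < R := (dist_pos.2 hz.2).trans_le (hGR hz.1)
  obtain ⟨C, hC⟩ := hg.logBounded
  refine le_of_harmonicOnNhd_diff_singleton hG (isBounded_closedBall.subset hGR) hg.harmonicOnNhd
    ((harmonicOnNhd_log_div_dist hR.ne' ζ).mono fun w hw ↦ hw.2) (M := C - Real.log R)
    ?_ (fun t ht _ ε hε ↦ ?_) z hz
  · filter_upwards [hC, self_mem_nhdsWithin] with w hCw hw
    rw [Real.log_div hR.ne' (dist_pos.2 hw.2).ne']
    linarith [(abs_le.1 hCw).2]
  · have hlim := (hg.boundaryLimit t ht).mono_left (nhdsWithin_mono t (sdiff_subset (t := {ζ})))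
    filter_upwards [hlim.eventually_lt_const hε, self_mem_nhdsWithin] with w hlt hw
    linarith [Real.log_nonneg ((one_le_div (dist_pos.2 hw.2)).2 (mem_closedBall.1 (hGR hw.1)))]

lemma log_div_dist_le (hg : IsGreenFunction G ζ g) (hGr : ball ζ r ⊆ G) :
    ∀ z ∈ ball ζ r \ {ζ}, Real.log (r / dist z ζ) ≤ g z := by
  intro z hz
  have hr : 0 < r := pos_of_mem_ball hz.1
  have hsub : ball ζ r \ {ζ} ⊆ G \ {ζ} := sdiff_subset_sdiff_left hGr
  obtain ⟨C, hC⟩ := hg.logBounded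
  refine le_of_harmonicOnNhd_diff_singleton isOpen_ball isBounded_ball
    ((harmonicOnNhd_log_div_dist hr.ne' ζ).mono fun w hw ↦ hw.2) (hg.harmonicOnNhd.mono hsub)
    (M := C + Real.log r) ?_ (fun t ht _ ε hε ↦ ?_) z hz
  · filter_upwards [hC.filter_mono (nhdsWithin_mono ζ hsub), self_mem_nhdsWithin] with w hCw hw
    rw [Real.log_div hr.ne' (dist_pos.2 hw.2).ne']
    linarith [(abs_le.1 hCw).1]
  · have hlim := tendsto_log_div_dist_of_mem_sphere hr.ne' (frontier_ball_subset_sphere ht)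
    filter_upwards [(hlim.eventually_lt_const hε).filter_mono nhdsWithin_le_nhds,
      self_mem_nhdsWithin] with w hlt hw
    linarith [hg.pos w (hsub hw)]

lemma le_of_mem_annulus (hg : IsGreenFunction G ζ g) (hs : 0 < s) (hsr : s < r)
    (hGr : ball a r ⊆ G) (hc : 0 ≤ c) (hle : ∀ z ∈ closedBall a s \ {ζ}, c ≤ g z) :
    ∀ z ∈ (ball a r \ closedBall a s) \ {ζ},
      c / Real.log (r / s) * Real.log (r / dist z a) ≤ g z := by
  have hr : 0 < r := hs.trans hsr
  set U := ball a r \ closedBall a s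
  have hUG : U \ {ζ} ⊆ G \ {ζ} := sdiff_subset_sdiff_left (sdiff_subset.trans hGr)
  have hUa : U ⊆ {a}ᶜ := fun z hz hza ↦ hz.2 (hza ▸ mem_closedBall_self hs.le)
  have hle_c : ∀ z ∈ U, c / Real.log (r / s) * Real.log (r / dist z a) ≤ c := fun z hz ↦
    div_log_mul_log_le hs hsr (not_le.1 hz.2).le hc
  refine le_of_harmonicOnNhd_diff_singleton (isOpen_ball.sdiff isClosed_closedBall)
    (isBounded_ball.subset sdiff_subset)
    (((harmonicOnNhd_log_div_dist hr.ne' a).mono (sdiff_subset.trans hUa)).const_smul)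
    (hg.harmonicOnNhd.mono hUG) (M := c) ?_ (fun t ht htζ ε hε ↦ ?_)
  · filter_upwards [self_mem_nhdsWithin] with z hz
    exact (hle_c z hz.1).trans (le_add_of_nonneg_left (hg.pos z (hUG hz)).le)
  rw [(isOpen_ball.sdiff isClosed_closedBall).frontier_eq] at ht
  by_cases htr : t ∈ ball a r
  · have hts : t ∈ closedBall a s := by
      by_contra hts
      exact ht.2 ⟨htr, hts⟩
    have hcont : ContinuousAt g t := (hg.harmonicOnNhd t ⟨hGr htr, htζ⟩).1.continuousAt
    have hgt : c - ε < g t := (sub_lt_self c hε).trans_le (hle t ⟨hts, htζ⟩)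
    filter_upwards [(hcont.eventually_const_lt hgt).filter_mono nhdsWithin_le_nhds,
      self_mem_nhdsWithin] with z hlt hz
    exact (hle_c z hz.1).trans_lt (sub_lt_iff_lt_add.1 hlt)
  · have htsphere : t ∈ sphere a r :=
      le_antisymm (closure_ball_subset_closedBall (closure_mono sdiff_subset ht.1)) (not_lt.1 htr)
    have hlim := (tendsto_log_div_dist_of_mem_sphere hr.ne' htsphere).const_mul
      (c / Real.log (r / s))
    rw [mul_zero] at hlim
    filter_upwards [(hlim.eventually_lt_const hε).filter_mono nhdsWithin_le_nhds,
      self_mem_nhdsWithin] with z hlt hz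
    exact hlt.trans (lt_add_of_pos_left ε (hg.pos z (hUG hz)))

lemma le_of_mem_closedBall (hg : IsGreenFunction G ζ g) (hs : 0 < s) (hsρ : s ≤ ρ) (hρr : ρ < r)
    (hGr : ball a r ⊆ G) (hc : 0 ≤ c) (hle : ∀ z ∈ closedBall a s \ {ζ}, c ≤ g z) :
    ∀ z ∈ closedBall a ρ \ {ζ}, c / Real.log (r / s) * Real.log (r / ρ) ≤ g z := by
  intro z hz
  have hρ : 0 < ρ := hs.trans_le hsρ
  have hr : 0 < r := hρ.trans hρr
  have hlog : 0 < Real.log (r / s) := Real.log_pos ((one_lt_div hs).2 (hsρ.trans_lt hρr))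
  by_cases hzs : z ∈ closedBall a s
  · exact (div_log_mul_log_le hs (hsρ.trans_lt hρr) hsρ hc).trans (hle z ⟨hzs, hz.2⟩)
  · have hza : 0 < dist z a := hs.trans (not_le.1 hzs)
    have hzρ : dist z a ≤ ρ := hz.1
    calc c / Real.log (r / s) * Real.log (r / ρ)
        ≤ c / Real.log (r / s) * Real.log (r / dist z a) := by gcongr
      _ ≤ g z := hg.le_of_mem_annulus hs (hsρ.trans_lt hρr) hGr hc hle z
          ⟨⟨hzρ.trans_lt hρr, hzs⟩, hz.2⟩

lemma mul_le_of_frontier (hg : IsGreenFunction G ζ g) {ζ₀ : ℂ} {g₀ : ℂ → ℝ}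
    (hg₀ : IsGreenFunction G ζ₀ g₀) (hG : IsOpen G) (hGb : Bornology.IsBounded G) {S : Set ℂ}
    (hS : IsClosed S) (hζ : ζ ∈ interior S) (hζ₀ : ζ₀ ∈ interior S) {C : ℝ}
    (hle : ∀ z ∈ frontier S ∩ G, C * g₀ z ≤ g z) : ∀ z ∈ G \ S, C * g₀ z ≤ g z := by
  have hne : ∀ ξ ∈ interior S, ∀ z ∈ closure (G \ S), z ≠ ξ := by
    rintro ξ hξ z hz rfl
    exact (closure_mono (fun w hw ↦ hw.2 : G \ S ⊆ Sᶜ) hz |> closure_compl.subset) hξ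
  have hsub : ∀ ξ ∈ interior S, G \ S ⊆ G \ {ξ} := fun ξ hξ z hz ↦
    ⟨hz.1, hne ξ hξ z (subset_closure hz)⟩
  refine le_of_harmonicOnNhd (hG.sdiff hS) (hGb.subset sdiff_subset)
    ((hg₀.harmonicOnNhd.mono (hsub ζ₀ hζ₀)).const_smul (c := C))
    (hg.harmonicOnNhd.mono (hsub ζ hζ)) fun t ht ε hε ↦ ?_
  rw [(hG.sdiff hS).frontier_eq] at ht
  by_cases htG : t ∈ G
  · have htS : t ∈ frontier S := by
      rw [hS.frontier_eq]
      exact ⟨not_not.1 fun htS ↦ ht.2 ⟨htG, htS⟩, fun hti ↦ hne t hti t ht.1 rfl⟩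
    have hcont : ContinuousAt g t := (hg.harmonicOnNhd t ⟨htG, hne ζ hζ t ht.1⟩).1.continuousAt
    have hcont₀ : ContinuousAt g₀ t :=
      (hg₀.harmonicOnNhd t ⟨htG, hne ζ₀ hζ₀ t ht.1⟩).1.continuousAt
    exact ((hcont₀.const_mul C).eventually_lt (hcont.add_const ε)
      ((hle t ⟨htS, htG⟩).trans_lt (lt_add_of_pos_right _ hε))).filter_mono nhdsWithin_le_nhds
  · have htf : t ∈ frontier G := hG.frontier_eq ▸ ⟨closure_mono sdiff_subset ht.1, htG⟩
    have hlim := ((hg₀.boundaryLimit t htf).const_mul C).mono_left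
      (nhdsWithin_mono t (sdiff_subset (t := S)))
    rw [mul_zero] at hlim
    filter_upwards [hlim.eventually_lt_const hε, self_mem_nhdsWithin] with z hlt hz
    exact hlt.trans (lt_add_of_pos_left ε (hg.pos z (hsub ζ hζ hz)))

end IsGreenFunction

lemma exists_forall_greenFunction_le {G : Set ℂ} (hG : IsOpen G) (hGb : Bornology.IsBounded G)
    {d : ℝ} (hd : 0 < d) :
    ∃ M > 0, ∀ ζ ∈ G, ∀ g, IsGreenFunction G ζ g → ∀ z ∈ G, d ≤ dist z ζ → g z ≤ M := by
  set R := max (diam G) (2 * d)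
  have hdR : d < R := (lt_two_mul_self hd).trans_le (le_max_right _ _)
  refine ⟨Real.log (R / d), Real.log_pos ((one_lt_div hd).2 hdR), fun ζ hζ g hg z hz hdz ↦ ?_⟩
  have hGR : G ⊆ closedBall ζ R := fun w hw ↦
    (dist_le_diam_of_mem hGb hw hζ).trans (le_max_left _ _)
  have hzζ : 0 < dist z ζ := hd.trans_le hdz
  have : 0 < R := hd.trans hdR
  calc g z ≤ Real.log (R / dist z ζ) := hg.le_log_div_dist hG hGR z ⟨hz, dist_pos.1 hzζ⟩
    _ ≤ Real.log (R / d) := by gcongr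

/-- `g_G(z, ξ)` is bounded below by a positive constant for `(ξ, z)` near `(ζ, a)` and off the
diagonal; `ζ = a` is allowed. Since Green functions are only given through `IsGreenFunction`, the
bound is required of every `g` with that property. -/
def GreenLowerBoundAt (G : Set ℂ) (ζ a : ℂ) : Prop :=
  ∃ c > 0, ∀ᶠ p in 𝓝 (ζ, a), ∀ g, IsGreenFunction G p.1 g → p.2 ≠ p.1 → c ≤ g p.2

namespace GreenLowerBoundAt

variable {G : Set ℂ} {ζ a b : ℂ}

lemma of_self (hG : IsOpen G) (hζ : ζ ∈ G) : GreenLowerBoundAt G ζ ζ := by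
  obtain ⟨r, hr, hball⟩ := isOpen_iff.1 hG ζ hζ
  refine ⟨Real.log 2, Real.log_pos one_lt_two, ?_⟩
  filter_upwards [ball_mem_nhds (ζ, ζ) (by positivity : 0 < r / 8)]
  rintro ⟨ξ, z⟩ hp g hg hne
  obtain ⟨hξ, hz⟩ : dist ξ ζ < r / 8 ∧ dist z ζ < r / 8 := by
    simpa [Prod.dist_eq] using hp
  have hpos : 0 < dist z ξ := dist_pos.2 hne
  have hzξ : dist z ξ < r / 4 := by linarith [dist_triangle_right z ξ ζ]
  have hsub : ball ξ (r / 2) ⊆ G := (ball_subset_ball' (by linarith)).trans hball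
  calc Real.log 2 ≤ Real.log (r / 2 / dist z ξ) :=
        Real.log_le_log two_pos ((le_div_iff₀ hpos).2 (by linarith))
    _ ≤ g z := hg.log_div_dist_le hsub z ⟨mem_ball.2 (by linarith), hne⟩

lemma of_mem_ball {r : ℝ} (h : GreenLowerBoundAt G ζ a) (hball : ball a r ⊆ G)
    (hb : b ∈ ball a r) : GreenLowerBoundAt G ζ b := by
  have hr : 0 < r := pos_of_mem_ball hb
  obtain ⟨c, hc, hev⟩ := h
  obtain ⟨s₀, hs₀, hs₀c⟩ := nhds_basis_closedBall.eventually_iff.1 hev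
  set s := min s₀ (r / 2)
  have hs : 0 < s := lt_min hs₀ (half_pos hr)
  have hsr : s < r := (min_le_right _ _).trans_lt (half_lt_self hr)
  obtain ⟨ρ, hρ, hρr⟩ := exists_between (max_lt hsr hb)
  obtain ⟨hsρ, hbρ⟩ := max_lt_iff.1 hρ
  have hlogs : 0 < Real.log (r / s) := Real.log_pos ((one_lt_div hs).2 hsr)
  have hlogρ : 0 < Real.log (r / ρ) := Real.log_pos ((one_lt_div (hs.trans hsρ)).2 hρr)
  refine ⟨c / Real.log (r / s) * Real.log (r / ρ), by positivity, ?_⟩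
  filter_upwards [prod_mem_nhds (closedBall_mem_nhds ζ hs) (closedBall_mem_nhds_of_mem hbρ)]
  rintro ⟨ξ, z⟩ ⟨hξ, hz⟩ g hg hne
  refine hg.le_of_mem_closedBall hs hsρ.le hρr hball hc.le (fun w hw ↦ ?_) z ⟨hz, hne⟩
  have hpair : (ξ, w) ∈ closedBall (ζ, a) s := by
    rw [← closedBall_prod_same]
    exact ⟨hξ, hw.1⟩
  exact hs₀c (closedBall_subset_closedBall (min_le_left _ _) hpair) g hg hw.2

lemma isOpen_setOf (G : Set ℂ) (ζ : ℂ) : IsOpen {a | GreenLowerBoundAt G ζ a} := by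
  refine isOpen_iff_mem_nhds.2 fun a ⟨c, hc, hev⟩ ↦ ?_
  have hslice : Tendsto (fun b ↦ (ζ, b)) (𝓝 a) (𝓝 (ζ, a)) := Continuous.tendsto (by fun_prop) a
  exact (hslice.eventually hev.eventually_nhds).mono fun b hb ↦ ⟨c, hc, hb⟩

theorem of_isPreconnected (hG : IsOpen G) (hGc : IsPreconnected G) (hζ : ζ ∈ G) (ha : a ∈ G) :
    GreenLowerBoundAt G ζ a := by
  suffices G ⊆ {a | GreenLowerBoundAt G ζ a} from this ha
  refine hGc.subset_of_closure_inter_subset (isOpen_setOf G ζ) ⟨ζ, hζ, of_self hG hζ⟩ ?_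
  rintro b ⟨hb, hbG⟩
  obtain ⟨R, hR, hball⟩ := isOpen_iff.1 hG b hbG
  obtain ⟨y, hy, hby⟩ := mem_closure_iff.1 hb (R / 2) (half_pos hR)
  have hsub : ball y (R / 2) ⊆ ball b R := by
    refine ball_subset_ball' ?_
    rw [dist_comm]
    linarith
  exact of_mem_ball hy (hsub.trans hball) hby

end GreenLowerBoundAt

lemma exists_pos_forall_of_isCompact_of_antitone {X : Type*} [TopologicalSpace X] {K : Set X}
    (hK : IsCompact K) {P : ℝ → X → Prop} (hP : ∀ x, Antitone (P · x))
    (hloc : ∀ x ∈ K, ∃ c > 0, ∀ᶠ y in 𝓝 x, P c y) : ∃ c > 0, ∀ x ∈ K, P c x := by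
  refine hK.induction_on (p := fun T ↦ ∃ c > 0, ∀ x ∈ T, P c x) ⟨1, one_pos, by simp⟩
    (fun T T' hTT' ⟨c, hc, h⟩ ↦ ⟨c, hc, fun x hx ↦ h x (hTT' hx)⟩) ?_ fun x hx ↦ ?_
  · rintro T T' ⟨c, hc, h⟩ ⟨c', hc', h'⟩
    refine ⟨min c c', lt_min hc hc', ?_⟩
    rintro x (hx | hx)
    exacts [hP x (min_le_left c c') (h x hx), hP x (min_le_right c c') (h' x hx)]
  · obtain ⟨c, hc, h⟩ := hloc x hx
    exact ⟨{y | P c y}, mem_nhdsWithin_of_mem_nhds h, c, hc, fun _ hy ↦ hy⟩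

theorem exists_forall_le_greenFunction {G : Set ℂ} (hG : IsOpen G) (hGc : IsPreconnected G)
    {K S : Set ℂ} (hK : IsCompact K) (hKG : K ⊆ G) (hS : IsCompact S) (hSG : S ⊆ G) :
    ∃ c > 0, ∀ ζ ∈ K, ∀ g, IsGreenFunction G ζ g → ∀ z ∈ S, z ≠ ζ → c ≤ g z := by
  obtain ⟨c, hc, hle⟩ := exists_pos_forall_of_isCompact_of_antitone (hK.prod hS)
    (P := fun c p ↦ ∀ g, IsGreenFunction G p.1 g → p.2 ≠ p.1 → c ≤ g p.2)
    (fun p c c' hcc' h g hg hne ↦ hcc'.trans (h g hg hne))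
    fun p hp ↦ GreenLowerBoundAt.of_isPreconnected hG hGc (hKG hp.1) (hSG hp.2)
  exact ⟨c, hc, fun ζ hζ g hg z hz hne ↦ hle (ζ, z) ⟨hζ, hz⟩ g hg hne⟩

theorem harnack_green_lower_bound_general {G : Set ℂ} (hG : IsOpen G) (hGc : IsPreconnected G)
    (hGb : Bornology.IsBounded G) {K : Set ℂ} (hK : IsCompact K) (hKG : K ⊆ G)
    {δ : ℝ} (hδ : 0 < δ) :
    ∃ C > 0, ∀ ζ ∈ K, ∀ ζ₀ ∈ K, ∀ g g₀ : ℂ → ℝ,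
      IsGreenFunction G ζ g → IsGreenFunction G ζ₀ g₀ →
        ∀ z ∈ G, δ < infDist z K → C * g₀ z ≤ g z := by
  obtain ⟨ε, hε, hεG⟩ := hK.exists_cthickening_subset_open hG hKG
  set d := min δ ε
  have hd : 0 < d := lt_min hδ hε
  set S := cthickening d K
  have hSG : S ⊆ G := (cthickening_mono (min_le_right _ _) K).trans hεG
  have hthick : thickening d K ⊆ interior S := thickening_subset_interior_cthickening d K
  have hKS : K ⊆ interior S := (self_subset_thickening hd K).trans hthick
  obtain ⟨c, hc, hlower⟩ := exists_forall_le_greenFunction hG hGc hK hKG hK.cthickening hSG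
  obtain ⟨M, hM, hupper⟩ := exists_forall_greenFunction_le hG hGb hd
  refine ⟨c / M, div_pos hc hM, fun ζ hζ ζ₀ hζ₀ g g₀ hg hg₀ z hz hzK ↦ ?_⟩
  have hfrontier : ∀ t ∈ frontier S ∩ G, c / M * g₀ t ≤ g t := by
    rintro t ⟨ht, htG⟩
    have hdist : ∀ ξ ∈ K, d ≤ dist t ξ := fun ξ hξ ↦
      not_lt.1 fun hlt ↦ ht.2 (hthick (mem_thickening_iff.2 ⟨ξ, hξ, hlt⟩))
    calc c / M * g₀ t ≤ c / M * M := by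
          gcongr
          exact hupper ζ₀ (hKG hζ₀) g₀ hg₀ t htG (hdist ζ₀ hζ₀)
      _ = c := div_mul_cancel₀ c hM.ne'
      _ ≤ g t := hlower ζ hζ g hg t (isClosed_cthickening.frontier_subset ht)
          (dist_pos.1 (hd.trans_le (hdist ζ hζ)))
  have hzS : z ∉ S := fun h ↦
    ((min_le_left δ ε).trans_lt hzK).not_ge (ENNReal.toReal_le_of_le_ofReal hd.le h)
  exact hg.mul_le_of_frontier hg₀ hG hGb isClosed_cthickening (hKS hζ) (hKS hζ₀) hfrontier z
    ⟨hz, hzS⟩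

/-- **Harnack-type inequality (2.2).** Let `G` be a bounded simply connected domain,
`ζ₀ ∈ G`, `K ⊆ G` compact with `ζ₀ ∈ K`, and `δ > 0`. Then there is a constant
`C = C(K,δ,ζ₀) > 0` such that `g_G(z,ζ) ≥ C g_G(z,ζ₀)` for all `ζ ∈ K` and all `z ∈ G`
with `dist(z,K) > δ`. -/
theorem harnack_green_lower_bound
    (G : Set ℂ) (hGopen : IsOpen G) (hGconn : IsConnected G)
    (hGbdd : Bornology.IsBounded G) (hGsc : SimplyConnectedSpace G)
    (ζ₀ : ℂ) (hζ₀ : ζ₀ ∈ G)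
    (K : Set ℂ) (hK : IsCompact K) (hKG : K ⊆ G) (hζ₀K : ζ₀ ∈ K)
    (δ : ℝ) (hδ : 0 < δ) :
    ∃ C > 0, ∀ ζ ∈ K, ∀ g g₀ : ℂ → ℝ,
      IsGreenFunction G ζ g → IsGreenFunction G ζ₀ g₀ →
        ∀ z ∈ G, δ < Metric.infDist z K → C * g₀ z ≤ g z := by
  obtain ⟨C, hC, hle⟩ :=
    harnack_green_lower_bound_general hGopen hGconn.isPreconnected hGbdd hK hKG hδ
  exact ⟨C, hC, fun ζ hζ ↦ hle ζ hζ ζ₀ hζ₀K⟩
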